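/- arXiv:1811.02226 — 3 statements merged into one kernel-verified Lean document; each statement's English description precedes it below -/
import Mathlib

section
/- Let γ ∈ (0,2], B ≥ 0 and M ≥ 0. Let F:[0,1]→ℝ and, for each integer α ≥ 1, let F̂^α, F^α:[0,1]→ℝ be functions with sup_{α≥1} ‖F̂^α‖_∞ ≤ M, and let σ:{1,2,…}→[0,∞). Assume (i) for every α ≥ 1, ‖F̂^α − F^α‖_∞ ≤ σ(α), and (ii) for every α ≥ 1, ‖F − F^α‖_∞ ≤ 2B·α^{−γ/2}. Define Δ(α) := sup_{α' ≥ 1} (‖F̂^{α'} − F̂^{min(α,α')}‖_∞ − σ(α')). Then any integer α̂ ≥ 1 satisfying Δ(α̂) + σ(α̂) ≤ Δ(α) + σ(α) for all α ≥ 1 obeys, for every integer α ≥ 1, ‖F̂^{α̂} − F‖_∞ ≤ 5σ(α) + 10B·α^{−γ/2}. -/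
open Set

/-- Deterministic Goldenshluger–Lepski selection argument (Section 4.3): given a family of
estimators `F̂^α` of `F` with variance bounds `σ(α)` against intermediate approximations
`F^α` and bias bounds `2B·α^{−γ/2}`, any minimizer `α̂` of `Δ(α) + σ(α)`, where
`Δ(α) = sup_{α'≥1} (‖F̂^{α'} − F̂^{min(α,α')}‖_∞ − σ(α'))`, satisfies
`‖F̂^{α̂} − F‖_∞ ≤ 5σ(α) + 10B·α^{−γ/2}` for every `α ≥ 1`. -/
theorem goldenshluger_lepski (γ B M : ℝ) (hγ : γ ∈ Ioc (0 : ℝ) 2) (hB : 0 ≤ B) (hM : 0 ≤ M)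
    (F : ℝ → ℝ) (Fhat Fa : ℕ → ℝ → ℝ) (σ : ℕ → ℝ)
    (hσ : ∀ α : ℕ, 1 ≤ α → 0 ≤ σ α)
    (hbdd : ∀ α : ℕ, 1 ≤ α → ∀ u ∈ Icc (0 : ℝ) 1, |Fhat α u| ≤ M)
    (hvar : ∀ α : ℕ, 1 ≤ α → ∀ u ∈ Icc (0 : ℝ) 1, |Fhat α u - Fa α u| ≤ σ α)
    (hbias : ∀ α : ℕ, 1 ≤ α → ∀ u ∈ Icc (0 : ℝ) 1,
      |F u - Fa α u| ≤ 2 * B * (α : ℝ) ^ (-(γ / 2)))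
    (Δ : ℕ → ℝ)
    (hΔ : ∀ α : ℕ, Δ α = ⨆ α' : {k : ℕ // 1 ≤ k},
      ((⨆ u : Icc (0 : ℝ) 1, |Fhat α'.1 u.1 - Fhat (min α α'.1) u.1|) - σ α'.1))
    (αhat : ℕ) (hαhat : 1 ≤ αhat)
    (hmin : ∀ α : ℕ, 1 ≤ α → Δ αhat + σ αhat ≤ Δ α + σ α) :
    ∀ α : ℕ, 1 ≤ α → ∀ u ∈ Icc (0 : ℝ) 1,
      |Fhat αhat u - F u| ≤ 5 * σ α + 10 * B * (α : ℝ) ^ (-(γ / 2)) := by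
  intro α hα u hu
  have hin : ∀ β : ℕ, 1 ≤ β → ∀ k : ℕ, 1 ≤ k →
      BddAbove (range fun u : Icc (0 : ℝ) 1 => |Fhat k u.1 - Fhat (min β k) u.1|) := by
    intro β hβ k hk
    refine ⟨2 * M, ?_⟩
    rintro _ ⟨v, rfl⟩
    have h1 := abs_le.1 (hbdd k hk v.1 v.2)
    have h2 := abs_le.1 (hbdd (min β k) (le_min hβ hk) v.1 v.2)
    exact abs_le.2 ⟨by linarith, by linarith⟩
  haveI : Nonempty (Icc (0 : ℝ) 1) := ⟨⟨u, hu⟩⟩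
  haveI : Nonempty {k : ℕ // 1 ≤ k} := ⟨⟨1, le_rfl⟩⟩
  have hlow : ∀ β : ℕ, 1 ≤ β → ∀ k : ℕ, 1 ≤ k →
      |Fhat k u - Fhat (min β k) u| - σ k ≤ Δ β := by
    intro β hβ k hk
    have hb : BddAbove (range fun α' : {k : ℕ // 1 ≤ k} =>
      ((⨆ u : Icc (0 : ℝ) 1, |Fhat α'.1 u.1 - Fhat (min β α'.1) u.1|) - σ α'.1)) := by
      refine ⟨2 * M, ?_⟩
      rintro _ ⟨j, rfl⟩
      have hs := hσ j.1 j.2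
      have : (⨆ u : Icc (0 : ℝ) 1, |Fhat j.1 u.1 - Fhat (min β j.1) u.1|) ≤ 2 * M := by
        refine ciSup_le fun v => ?_
        have h1 := abs_le.1 (hbdd j.1 j.2 v.1 v.2)
        have h2 := abs_le.1 (hbdd (min β j.1) (le_min hβ j.2) v.1 v.2)
        exact abs_le.2 ⟨by linarith, by linarith⟩
      simp only
      linarith
    have h1 := le_ciSup hb ⟨k, hk⟩
    have h2 := le_ciSup (hin β hβ k hk) ⟨u, hu⟩
    rw [hΔ β]
    simp only at h1 h2
    linarith
  set b : ℝ := 2 * B * (α : ℝ) ^ (-(γ / 2)) with hb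
  have hb0 : 0 ≤ b := by positivity
  have hs := hσ α hα
  have hup : Δ α ≤ σ α + 2 * b := by
    rw [hΔ α]
    refine ciSup_le fun j => ?_
    have hj := hσ j.1 j.2
    rw [sub_le_iff_le_add]
    refine ciSup_le fun v => ?_
    rcases le_total j.1 α with h | h
    · rw [min_eq_right h, sub_self, abs_zero]
      linarith
    · rw [min_eq_left h]
      have hmono : 2 * B * (j.1 : ℝ) ^ (-(γ / 2)) ≤ b := by
        have : (j.1 : ℝ) ^ (-(γ / 2)) ≤ (α : ℝ) ^ (-(γ / 2)) :=
          Real.rpow_le_rpow_of_nonpos (by exact_mod_cast hα) (by exact_mod_cast h)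
            (by linarith [hγ.1])
        rw [hb]
        gcongr
      have h1 := abs_le.1 (hvar j.1 j.2 v.1 v.2)
      have h2 := abs_le.1 (hvar α hα v.1 v.2)
      have h3 := abs_le.1 (hbias j.1 j.2 v.1 v.2)
      have h4 := abs_le.1 (hbias α hα v.1 v.2)
      exact abs_le.2 ⟨by linarith, by linarith⟩
  have hm := hmin α hα
  have hsh := hσ αhat hαhat
  have h2 := abs_le.1 (hvar α hα u hu)
  have h4 := abs_le.1 (hbias α hα u hu)
  have hgoal : 10 * B * (α : ℝ) ^ (-(γ / 2)) = 5 * b := by rw [hb]; ring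
  rw [hgoal]
  rcases le_total α αhat with h | h
  · have e1 := hlow α hα αhat hαhat
    have e2 := hlow αhat hαhat α hα
    rw [min_eq_left h] at e1
    rw [min_eq_right h, sub_self, abs_zero] at e2
    have e3 := abs_le.1 (sub_le_iff_le_add.1 e1)
    exact abs_le.2 ⟨by linarith, by linarith⟩
  · have e1 := hlow αhat hαhat α hα
    rw [min_eq_left h] at e1
    have e3 := abs_le.1 (sub_le_iff_le_add.1 e1)
    exact abs_le.2 ⟨by linarith, by linarith⟩
end

section
/- Let (F_m)_{m∈ℕ} be a filtration on a probability space, let (M_m)_{m∈ℕ} be a martingale with respect to (F_m) with M_0 = 0, and let K > 0. Suppose that for every m ≥ 1 there is an F_{m−1}-measurable random variable A_m such that A_m ≤ M_m − M_{m−1} ≤ A_m + K almost surely. Then for every ℕ-valued random variable R and every real z > 0, P(R ≥ 1 and |M_R| ≥ K·√(R(z + 2·log R)/2)) ≤ (π²/3)·e^{−z}. -/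
open MeasureTheory

lemma hoeff_det (a K t : ℝ) (hK : 0 < K) (ha : a ≤ 0) (ha' : 0 ≤ a + K) :
    ((a + K) * Real.exp (t * a) - a * Real.exp (t * (a + K))) / K ≤
      Real.exp (K ^ 2 / 4 * t ^ 2 / 2) := by
  let p : ENNReal := ENNReal.ofReal ((a + K) / K)
  let q : ENNReal := ENNReal.ofReal (-a / K)
  have hp : 0 ≤ (a + K) / K := by positivity
  have hq : 0 ≤ -a / K := div_nonneg (by linarith) hK.le
  let ν : Measure ℝ := p • Measure.dirac a + q • Measure.dirac (a + K)
  have hν : IsProbabilityMeasure ν := by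
    constructor
    simp only [ν, p, q, Measure.add_apply, Measure.smul_apply, measure_univ, smul_eq_mul, mul_one]
    rw [← ENNReal.ofReal_add hp hq, ← ENNReal.ofReal_one]
    congr 1
    field_simp
    ring
  have hint : ∀ f : ℝ → ℝ, ∫ x, f x ∂ν = (a + K) / K * f a + (-a / K) * f (a + K) := by
    intro f
    have h1 : Integrable f (p • Measure.dirac a) :=
      (integrable_dirac (by simp)).smul_measure ENNReal.ofReal_ne_top
    have h2 : Integrable f (q • Measure.dirac (a + K)) :=
      (integrable_dirac (by simp)).smul_measure ENNReal.ofReal_ne_top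
    rw [integral_add_measure h1 h2, integral_smul_measure, integral_smul_measure,
      integral_dirac, integral_dirac]
    simp only [p, q, ENNReal.toReal_ofReal hp, ENNReal.toReal_ofReal hq, smul_eq_mul]
  have hb : ∀ᵐ x ∂ν, x ∈ Set.Icc a (a + K) := by
    have hm : MeasurableSet {x : ℝ | x ∈ Set.Icc a (a + K)} := measurableSet_Icc
    rw [ae_add_measure_iff]
    constructor
    · apply Measure.ae_smul_measure
      rw [ae_dirac_iff hm]
      exact ⟨le_rfl, by linarith⟩
    · apply Measure.ae_smul_measure
      rw [ae_dirac_iff hm]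
      exact ⟨by linarith, le_rfl⟩
  have key := (ProbabilityTheory.hasSubgaussianMGF_of_mem_Icc_of_integral_eq_zero
    (X := fun x : ℝ => x) (μ := ν) aemeasurable_id hb
    (by rw [hint]; field_simp; ring)).mgf_le t
  unfold ProbabilityTheory.mgf at key
  rw [hint] at key
  have e : (((‖a + K - a‖₊ / 2) ^ 2 : NNReal) : ℝ) = K ^ 2 / 4 := by
    push_cast
    rw [add_sub_cancel_left, Real.norm_of_nonneg hK.le]
    ring
  rw [e] at key
  refine le_trans (le_of_eq ?_) key
  ring

lemma exp_chord (a K t d : ℝ) (hK : 0 < K) (h1 : a ≤ d) (h2 : d ≤ a + K) :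
    Real.exp (t * d) ≤ ((a + K) * Real.exp (t * a) - a * Real.exp (t * (a + K))) / K +
      (Real.exp (t * (a + K)) - Real.exp (t * a)) / K * d := by
  have h := convexOn_exp.2 (Set.mem_univ (t * a)) (Set.mem_univ (t * (a + K)))
    (show 0 ≤ (a + K - d) / K from div_nonneg (by linarith) hK.le)
    (show 0 ≤ (d - a) / K from div_nonneg (by linarith) hK.le) (by field_simp; ring)
  simp only [smul_eq_mul] at h
  have e : (a + K - d) / K * (t * a) + (d - a) / K * (t * (a + K)) = t * d := by
    field_simp
    ring
  rw [e] at h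
  refine h.trans (le_of_eq ?_)
  ring

lemma mart_step {Ω : Type*} (m : MeasurableSpace Ω) [m0 : MeasurableSpace Ω]
    (μ : Measure Ω) [IsProbabilityMeasure μ] (hm : m ≤ m0)
    (K : ℝ) (hK : 0 < K) (X D A : Ω → ℝ) (hX : StronglyMeasurable[m] X)
    (B : ℝ) (hB : ∀ᵐ ω ∂μ, |X ω| ≤ B)
    (hD : Integrable D μ) (hD0 : μ[D|m] =ᵐ[μ] 0)
    (hA : StronglyMeasurable[m] A)
    (hAD : ∀ᵐ ω ∂μ, A ω ≤ D ω ∧ D ω ≤ A ω + K) :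
    (∀ᵐ ω ∂μ, |D ω| ≤ K) ∧ ∀ t : ℝ,
      ∫ ω, Real.exp (t * (X ω + D ω)) ∂μ ≤
        Real.exp (K ^ 2 / 4 * t ^ 2 / 2) * ∫ ω, Real.exp (t * X ω) ∂μ := by
  have hAi : Integrable A μ := by
    refine (hD.abs.add (integrable_const K)).mono' (hA.mono hm).aestronglyMeasurable ?_
    filter_upwards [hAD] with ω h
    simp only [Pi.add_apply, Real.norm_eq_abs]
    rw [abs_le]
    constructor
    · linarith [neg_abs_le (D ω)]
    · linarith [le_abs_self (D ω)]
  have hA0 : ∀ᵐ ω ∂μ, A ω ≤ 0 ∧ 0 ≤ A ω + K := by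
    have h1 := condExp_mono (m := m) hAi hD (hAD.mono fun ω h => h.1)
    have h2 := condExp_mono (m := m) hD (hAi.add (integrable_const K)) (hAD.mono fun ω h => h.2)
    rw [condExp_of_stronglyMeasurable hm hA hAi] at h1
    rw [condExp_of_stronglyMeasurable hm (hA.add stronglyMeasurable_const)
      (hAi.add (integrable_const K))] at h2
    filter_upwards [h1, h2, hD0] with ω h1 h2 h3
    rw [h3] at h1 h2
    exact ⟨h1, h2⟩
  have hDb : ∀ᵐ ω ∂μ, |D ω| ≤ K := by
    filter_upwards [hAD, hA0] with ω h1 h2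
    rw [abs_le]
    constructor <;> linarith [h1.1, h1.2, h2.1, h2.2]
  refine ⟨hDb, fun t => ?_⟩
  have hXm : Measurable[m] X := hX.measurable
  have hAm : Measurable[m] A := hA.measurable
  have hX0 : Measurable X := hXm.mono hm le_rfl
  have hA00 : Measurable A := hAm.mono hm le_rfl
  let Q : Ω → ℝ := fun ω => Real.exp (t * X ω) *
    ((Real.exp (t * (A ω + K)) - Real.exp (t * A ω)) / K)
  have hQ : StronglyMeasurable[m] Q := by
    apply Measurable.stronglyMeasurable
    exact (Real.measurable_exp.comp (hXm.const_mul t)).mul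
      (((Real.measurable_exp.comp ((hAm.add_const K).const_mul t)).sub
        (Real.measurable_exp.comp (hAm.const_mul t))).div_const K)
  have hexpb : ∀ x C : ℝ, |x| ≤ C → Real.exp (t * x) ≤ Real.exp (|t| * C) := by
    intro x C h
    rw [Real.exp_le_exp]
    calc t * x ≤ |t * x| := le_abs_self _
      _ = |t| * |x| := abs_mul _ _
      _ ≤ _ := by gcongr
  have hQb : ∀ᵐ ω ∂μ, ‖Q ω‖ ≤ Real.exp (|t| * B) * (Real.exp (|t| * K) / K) := by
    filter_upwards [hB, hA0] with ω h1 h2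
    simp only [Q, Real.norm_eq_abs, abs_mul, abs_div, Real.abs_exp, abs_of_pos hK]
    have := hexpb (A ω) K (abs_le.2 ⟨by linarith [h2.2], by linarith [h2.1]⟩)
    have := hexpb (A ω + K) K (abs_le.2 ⟨by linarith [h2.2], by linarith [h2.1]⟩)
    refine mul_le_mul (hexpb _ _ h1) (div_le_div_of_nonneg_right ?_ hK.le)
      (by positivity) (by positivity)
    · rw [abs_le]
      constructor <;> linarith [Real.exp_pos (t * A ω), Real.exp_pos (t * (A ω + K))]
  have hQD : Integrable (Q * D) μ :=
    hD.bdd_mul (hQ.mono hm).aestronglyMeasurable hQb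
  have hz : ∫ ω, (Q * D) ω ∂μ = 0 := by
    rw [← integral_condExp hm]
    have h := condExp_mul_of_stronglyMeasurable_left hQ hQD hD
    rw [integral_congr_ae (g := fun _ => (0 : ℝ))]
    · simp
    · filter_upwards [h, hD0] with ω h1 h2
      rw [h1, Pi.mul_apply, h2]
      simp
  have hXi : Integrable (fun ω => Real.exp (t * X ω)) μ := by
    apply ProbabilityTheory.integrable_exp_mul_of_mem_Icc (a := -B) (b := B) hX0.aemeasurable
    filter_upwards [hB] with ω h using abs_le.1 h
  have hXDi : Integrable (fun ω => Real.exp (t * (X ω + D ω))) μ := by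
    apply ProbabilityTheory.integrable_exp_mul_of_mem_Icc (X := fun ω => X ω + D ω)
      (a := -(B + K)) (b := B + K) (hX0.aemeasurable.add hD.aemeasurable)
    filter_upwards [hB, hDb] with ω h h'
    exact abs_le.1 ((abs_add_le _ _).trans (add_le_add h h'))
  calc ∫ ω, Real.exp (t * (X ω + D ω)) ∂μ
      ≤ ∫ ω, (Real.exp (K ^ 2 / 4 * t ^ 2 / 2) * Real.exp (t * X ω) + (Q * D) ω) ∂μ := by
        apply integral_mono_ae hXDi ((hXi.const_mul _).add hQD)
        filter_upwards [hAD, hA0] with ω h1 h2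
        have c := exp_chord (A ω) K t (D ω) hK h1.1 h1.2
        have d := hoeff_det (A ω) K t hK h2.1 h2.2
        have e := mul_le_mul_of_nonneg_left
          (c.trans (add_le_add d le_rfl)) (Real.exp_pos (t * X ω)).le
        simp only [Q, Pi.mul_apply, Pi.add_apply]
        rw [mul_add t, Real.exp_add]
        refine e.trans (le_of_eq ?_)
        ring
    _ = _ := by
        rw [integral_add (hXi.const_mul _) hQD, hz, integral_const_mul, add_zero]

lemma mart_subG {Ω : Type*} [m0 : MeasurableSpace Ω]
    (μ : Measure Ω) [IsProbabilityMeasure μ]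
    (ℱ : Filtration ℕ m0) (M : ℕ → Ω → ℝ)
    (hM : Martingale M ℱ μ) (hM0 : M 0 = 0)
    (K : ℝ) (hK : 0 < K)
    (hdiff : ∀ m : ℕ, ∃ A : Ω → ℝ, StronglyMeasurable[ℱ m] A ∧
      ∀ᵐ ω ∂μ, A ω ≤ M (m + 1) ω - M m ω ∧ M (m + 1) ω - M m ω ≤ A ω + K) (n : ℕ) :
    ProbabilityTheory.HasSubgaussianMGF (M n) (n * (‖K‖₊ / 2) ^ 2) μ := by
  have step : ∀ n B, (∀ᵐ ω ∂μ, |M n ω| ≤ B) → (∀ᵐ ω ∂μ, |M (n + 1) ω - M n ω| ≤ K) ∧ ∀ t : ℝ,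
      ∫ ω, Real.exp (t * (M n ω + (M (n + 1) ω - M n ω))) ∂μ ≤
        Real.exp (K ^ 2 / 4 * t ^ 2 / 2) * ∫ ω, Real.exp (t * M n ω) ∂μ := by
    intro n B hB
    obtain ⟨A, hA, hAD⟩ := hdiff n
    refine mart_step (ℱ n) μ (ℱ.le n) K hK (M n) (fun ω => M (n + 1) ω - M n ω) A
      (hM.stronglyAdapted n) B hB
      ((hM.integrable (n + 1)).sub (hM.integrable n)) ?_ hA hAD
    have h1 := condExp_sub (hM.integrable (n + 1)) (hM.integrable n) (ℱ n)
    have h2 := hM.condExp_ae_eq (Nat.le_succ n)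
    have h3 := hM.condExp_ae_eq (le_refl n)
    filter_upwards [h1, h2, h3] with ω h1 h2 h3
    refine h1.trans ?_
    simp only [Pi.sub_apply, Pi.zero_apply]
    rw [h3]
    exact sub_eq_zero.2 h2
  have bd : ∀ n : ℕ, ∀ᵐ ω ∂μ, |M n ω| ≤ n * K := by
    intro n
    induction n with
    | zero => simp [hM0]
    | succ n ih =>
      filter_upwards [ih, (step n _ ih).1] with ω h1 h2
      push_cast
      have := abs_add_le (M n ω) (M (n + 1) ω - M n ω)
      rw [add_sub_cancel] at this
      linarith
  refine ⟨fun t => ?_, fun t => ?_⟩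
  · apply ProbabilityTheory.integrable_exp_mul_of_mem_Icc (a := -(n * K)) (b := n * K)
      (hM.integrable n).aemeasurable
    filter_upwards [bd n] with ω h using abs_le.1 h
  · have e : (((n * (‖K‖₊ / 2) ^ 2 : NNReal)) : ℝ) = n * (K ^ 2 / 4) := by
      push_cast
      rw [Real.norm_of_nonneg hK.le]
      ring
    rw [e]
    unfold ProbabilityTheory.mgf
    clear e
    induction n with
    | zero => simp [hM0]
    | succ n ih =>
      have h := (step n _ (bd n)).2 t
      simp only [add_sub_cancel] at h
      refine h.trans ((mul_le_mul_of_nonneg_left ih (Real.exp_pos _).le).trans (le_of_eq ?_))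
      rw [← Real.exp_add]
      congr 1
      push_cast
      ring

/-- McDiarmid-type concentration at a random index, with logarithmic penalty: if `M` is a
martingale with `M_0 = 0` whose increments satisfy `A_m ≤ M_m − M_{m−1} ≤ A_m + K` for
some `F_{m−1}`-measurable `A_m`, then for any `ℕ`-valued random variable `R` and `z > 0`,
`P(R ≥ 1 and |M_R| ≥ K √(R(z + 2 log R)/2)) ≤ (π²/3) e^{−z}`. -/
theorem martingale_random_index_concentration {Ω : Type*} [m0 : MeasurableSpace Ω]
    (μ : Measure Ω) [IsProbabilityMeasure μ]
    (ℱ : Filtration ℕ m0) (M : ℕ → Ω → ℝ)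
    (hM : Martingale M ℱ μ) (hM0 : M 0 = 0)
    (K : ℝ) (hK : 0 < K)
    (hdiff : ∀ m : ℕ, ∃ A : Ω → ℝ, StronglyMeasurable[ℱ m] A ∧
      ∀ᵐ ω ∂μ, A ω ≤ M (m + 1) ω - M m ω ∧ M (m + 1) ω - M m ω ≤ A ω + K)
    (R : Ω → ℕ) (z : ℝ) (hz : 0 < z) :
    (μ {ω | 1 ≤ R ω ∧
        K * Real.sqrt ((R ω : ℝ) * (z + 2 * Real.log (R ω)) / 2) ≤ |M (R ω) ω|}).toReal ≤
      Real.pi ^ 2 / 3 * Real.exp (-z) := by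
  have hpt : ∀ n : ℕ, 1 ≤ n →
      μ.real {ω | K * Real.sqrt ((n : ℝ) * (z + 2 * Real.log n) / 2) ≤ |M n ω|} ≤
        2 * Real.exp (-z) * (1 / (n : ℝ) ^ 2) := by
    intro n hn
    have hn' : (0 : ℝ) < n := by exact_mod_cast hn
    have hlog : 0 ≤ Real.log n := Real.log_natCast_nonneg n
    set ε := K * Real.sqrt ((n : ℝ) * (z + 2 * Real.log n) / 2) with hε
    have hε0 : 0 ≤ ε := by positivity
    have hs := mart_subG μ ℱ M hM hM0 K hK hdiff n
    have h1 := hs.measure_ge_le hε0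
    have h2 := hs.neg.measure_ge_le hε0
    have e : (((n * (‖K‖₊ / 2) ^ 2 : NNReal)) : ℝ) = n * (K ^ 2 / 4) := by
      push_cast
      rw [Real.norm_of_nonneg hK.le]
      ring
    have e2 : Real.exp (-ε ^ 2 / (2 * (n * (K ^ 2 / 4)))) = Real.exp (-z) * (1 / (n : ℝ) ^ 2) := by
      have : -ε ^ 2 / (2 * (n * (K ^ 2 / 4))) = -z + -(2 * Real.log n) := by
        rw [hε, mul_pow, Real.sq_sqrt (by positivity)]
        field_simp
        ring
      rw [this, Real.exp_add, Real.exp_neg (2 * Real.log n), two_mul, Real.exp_add,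
        Real.exp_log hn']
      rw [one_div, sq]
    rw [e, e2] at h1 h2
    calc μ.real {ω | ε ≤ |M n ω|}
        ≤ μ.real ({ω | ε ≤ M n ω} ∪ {ω | ε ≤ (-M n) ω}) := by
          apply measureReal_mono _ (measure_ne_top _ _)
          intro ω h
          exact le_abs.1 (show ε ≤ |M n ω| from h)
      _ ≤ _ := measureReal_union_le _ _
      _ ≤ _ := by linarith
  have hsum : HasSum (fun n : ℕ => 2 * Real.exp (-z) * (1 / (n : ℝ) ^ 2))
      (2 * Real.exp (-z) * (Real.pi ^ 2 / 6)) := hasSum_zeta_two.mul_left _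
  have hmain : μ {ω | 1 ≤ R ω ∧
        K * Real.sqrt ((R ω : ℝ) * (z + 2 * Real.log (R ω)) / 2) ≤ |M (R ω) ω|} ≤
      ENNReal.ofReal (2 * Real.exp (-z) * (Real.pi ^ 2 / 6)) := by
    rw [← hsum.tsum_eq, ENNReal.ofReal_tsum_of_nonneg (fun n => by positivity) hsum.summable]
    refine le_trans (measure_mono (t := ⋃ n : ℕ, {ω | 1 ≤ n ∧
        K * Real.sqrt ((n : ℝ) * (z + 2 * Real.log n) / 2) ≤ |M n ω|}) ?_)
      ((measure_iUnion_le _).trans (ENNReal.tsum_le_tsum fun n => ?_))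
    · intro ω h
      exact Set.mem_iUnion.2 ⟨R ω, h⟩
    · by_cases hn : 1 ≤ n
      · simp only [hn, true_and]
        rw [← ofReal_measureReal]
        exact ENNReal.ofReal_le_ofReal (hpt n hn)
      · simp [hn]
  refine (ENNReal.toReal_le_of_le_ofReal (by positivity) hmain).trans (le_of_eq ?_)
  ring
end

section
/- Let α ≥ 1 be an integer, let (F_m)_{m∈ℕ} be a filtration on a probability space, and for each ℓ ∈ {1,…,α} let (M^ℓ_m)_{m∈ℕ} be a martingale with respect to (F_m) with M^ℓ_0 = 0. Let K > 0 and suppose that for every ℓ and every m ≥ 1 there is an F_{m−1}-measurable random variable A^ℓ_m such that A^ℓ_m ≤ M^ℓ_m − M^ℓ_{m−1} ≤ A^ℓ_m + K almost surely. Then for every ℕ-valued random variable R and every real z > 0, P(R ≥ 1 and max_{1≤ℓ≤α} |M^ℓ_R| ≥ K·√(R(z + log α + 2·log R)/2)) ≤ (π²/3)·e^{−z}. -/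
open MeasureTheory

lemma aux_two_point (a K t : ℝ) (hK : 0 < K) (ha : a ≤ 0) (ha' : 0 ≤ a + K) :
    (a + K) / K * Real.exp (t * a) + (-a) / K * Real.exp (t * (a + K))
      ≤ Real.exp (K ^ 2 / 4 * t ^ 2 / 2) := by
  have p0 : 0 ≤ (a + K) / K := by positivity
  have q0 : 0 ≤ (-a) / K := div_nonneg (by linarith) hK.le
  have pq : (a + K) / K + (-a) / K = 1 := by field_simp; ring
  let ν : Measure ℝ := ENNReal.ofReal ((a + K) / K) • Measure.dirac a
    + ENNReal.ofReal ((-a) / K) • Measure.dirac (a + K)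
  have hν : IsProbabilityMeasure ν := ⟨by
    simp only [ν, Measure.add_apply, Measure.smul_apply, measure_univ, smul_eq_mul, mul_one]
    rw [← ENNReal.ofReal_add p0 q0, pq, ENNReal.ofReal_one]⟩
  have hint (f : ℝ → ℝ) : ∫ x, f x ∂ν = (a + K) / K * f a + (-a) / K * f (a + K) := by
    have i1 (c : ℝ) : Integrable f (Measure.dirac c) := by
      exact integrable_dirac (by simp)
    simp only [ν]
    rw [integral_add_measure ((i1 _).smul_measure ENNReal.ofReal_ne_top)
      ((i1 _).smul_measure ENNReal.ofReal_ne_top)]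
    simp [integral_smul_measure, ENNReal.toReal_ofReal, p0, q0]
  have hb : ∀ᵐ x ∂ν, (fun x : ℝ => x) x ∈ Set.Icc a (a + K) := by
    simp only [ν]
    rw [ae_add_measure_iff]
    constructor
    · apply Measure.ae_smul_measure
      simp [hK.le]
    · apply Measure.ae_smul_measure
      simp [hK.le]
  have h := (ProbabilityTheory.hasSubgaussianMGF_of_mem_Icc_of_integral_eq_zero (μ := ν)
    (X := fun x => x) aemeasurable_id' hb (by rw [hint]; field_simp; ring)).mgf_le t
  rw [ProbabilityTheory.mgf, hint] at h
  have e : (((‖a + K - a‖₊ / 2) ^ 2 : NNReal) : ℝ) = K ^ 2 / 4 := by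
    simp [abs_of_pos hK]
    ring
  rw [e] at h
  exact h

lemma aux_pointwise (a K t x : ℝ) (hK : 0 < K) (ha : a ≤ 0) (ha' : 0 ≤ a + K)
    (h1 : a ≤ x) (h2 : x ≤ a + K) :
    Real.exp (t * x) ≤ Real.exp (K ^ 2 / 4 * t ^ 2 / 2)
      + (Real.exp (t * (a + K)) - Real.exp (t * a)) / K * x := by
  have h := aux_two_point a K t hK ha ha'
  have hc := convexOn_exp.2 (Set.mem_univ (t * a)) (Set.mem_univ (t * (a + K)))
    (show 0 ≤ (a + K - x) / K from div_nonneg (by linarith) hK.le)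
    (show 0 ≤ (x - a) / K from div_nonneg (by linarith) hK.le) (by field_simp; ring)
  simp only [smul_eq_mul] at hc
  have e : (a + K - x) / K * (t * a) + (x - a) / K * (t * (a + K)) = t * x := by
    field_simp; ring
  rw [e] at hc
  have e2 : (a + K - x) / K * Real.exp (t * a) + (x - a) / K * Real.exp (t * (a + K))
    = ((a + K) / K * Real.exp (t * a) + (-a) / K * Real.exp (t * (a + K)))
      + (Real.exp (t * (a + K)) - Real.exp (t * a)) / K * x := by
    field_simp; ring
  linarith

section
variable {Ω : Type*} [m0 : MeasurableSpace Ω] {μ : Measure Ω} [IsProbabilityMeasure μ]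
  {ℱ : Filtration ℕ m0} {M : ℕ → Ω → ℝ} {K : ℝ}

lemma aux_A (hM : Martingale M ℱ μ) (m : ℕ) (A : Ω → ℝ) (hA : StronglyMeasurable[ℱ m] A)
    (h : ∀ᵐ ω ∂μ, A ω ≤ M (m + 1) ω - M m ω ∧ M (m + 1) ω - M m ω ≤ A ω + K) :
    μ[M (m + 1) - M m | ℱ m] =ᵐ[μ] 0 ∧ ∀ᵐ ω ∂μ, A ω ≤ 0 ∧ 0 ≤ A ω + K := by
  have iX : Integrable (M (m + 1) - M m) μ := (hM.integrable _).sub (hM.integrable _)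
  have hA' : AEStronglyMeasurable A μ := (hA.mono (ℱ.le m)).aestronglyMeasurable
  have iA : Integrable A μ := by
    refine (iX.norm.add (integrable_const |K|)).mono' hA' ?_
    filter_upwards [h] with ω ⟨h1, h2⟩
    simp only [Pi.add_apply, Pi.sub_apply, Real.norm_eq_abs]
    rw [abs_le]
    constructor
    · have := neg_abs_le (M (m + 1) ω - M m ω); have := le_abs_self K; linarith
    · have := le_abs_self (M (m + 1) ω - M m ω); have := abs_nonneg K; linarith
  have hX0 : μ[M (m + 1) - M m | ℱ m] =ᵐ[μ] 0 := by
    filter_upwards [condExp_sub (hM.integrable (m + 1)) (hM.integrable m) (ℱ m),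
      hM.condExp_ae_eq (Nat.le_succ m), hM.condExp_ae_eq (le_refl m)] with ω h1 h2 h3
    rw [h1, Pi.sub_apply, h2, h3]; simp
  refine ⟨hX0, ?_⟩
  have l1 := condExp_mono (m := ℱ m) iA iX (h.mono fun ω hω => hω.1)
  have iAK : Integrable (fun ω => A ω + K) μ := iA.add (integrable_const K)
  have l2 := condExp_mono (m := ℱ m) iX iAK (h.mono fun ω hω => hω.2)
  rw [condExp_of_stronglyMeasurable (ℱ.le m) hA iA] at l1
  have hAK : StronglyMeasurable[ℱ m] (fun ω => A ω + K) := hA.add stronglyMeasurable_const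
  rw [condExp_of_stronglyMeasurable (ℱ.le m) hAK iAK] at l2
  filter_upwards [l1, l2, hX0] with ω h1 h2 h3
  rw [h3] at h1 h2
  exact ⟨h1, h2⟩

lemma aux_bdd (hM : Martingale M ℱ μ) (hM0 : M 0 = 0)
    (hdiff : ∀ m : ℕ, ∃ A : Ω → ℝ, StronglyMeasurable[ℱ m] A ∧
      ∀ᵐ ω ∂μ, A ω ≤ M (m + 1) ω - M m ω ∧ M (m + 1) ω - M m ω ≤ A ω + K) (m : ℕ) :
    ∀ᵐ ω ∂μ, |M m ω| ≤ m * K := by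
  induction m with
  | zero => simp [hM0]
  | succ m ih =>
    obtain ⟨A, hA, h⟩ := hdiff m
    filter_upwards [ih, h, (aux_A hM m A hA h).2] with ω h1 h2 h3
    rw [abs_le] at *
    push_cast
    constructor <;> linarith [h1.1, h1.2, h2.1, h2.2, h3.1, h3.2]

lemma aux_int (hM : Martingale M ℱ μ) (hM0 : M 0 = 0)
    (hdiff : ∀ m : ℕ, ∃ A : Ω → ℝ, StronglyMeasurable[ℱ m] A ∧
      ∀ᵐ ω ∂μ, A ω ≤ M (m + 1) ω - M m ω ∧ M (m + 1) ω - M m ω ≤ A ω + K) (m : ℕ) (t : ℝ) :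
    Integrable (fun ω => Real.exp (t * M m ω)) μ := by
  have hm : AEMeasurable (M m) μ := (hM.integrable m).aestronglyMeasurable.aemeasurable
  refine ProbabilityTheory.integrable_exp_mul_of_mem_Icc (a := -(m * K)) (b := m * K) hm ?_
  filter_upwards [aux_bdd hM hM0 hdiff m] with ω h
  exact abs_le.1 h

lemma aux_mgf (hK : 0 < K) (hM : Martingale M ℱ μ) (hM0 : M 0 = 0)
    (hdiff : ∀ m : ℕ, ∃ A : Ω → ℝ, StronglyMeasurable[ℱ m] A ∧
      ∀ᵐ ω ∂μ, A ω ≤ M (m + 1) ω - M m ω ∧ M (m + 1) ω - M m ω ≤ A ω + K) (m : ℕ) (t : ℝ) :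
    ∫ ω, Real.exp (t * M m ω) ∂μ ≤ Real.exp (m * (K ^ 2 / 4) * t ^ 2 / 2) := by
  induction m with
  | zero => simp [hM0]
  | succ m ih =>
    obtain ⟨A, hA, h⟩ := hdiff m
    obtain ⟨hX0, hA0⟩ := aux_A hM m A hA h
    set E := Real.exp (K ^ 2 / 4 * t ^ 2 / 2) with hE
    set G : Ω → ℝ := fun ω => Real.exp (t * M m ω) *
      ((Real.exp (t * (A ω + K)) - Real.exp (t * A ω)) / K) with hG
    have hexp {f : Ω → ℝ} (hf : StronglyMeasurable[ℱ m] f) :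
        StronglyMeasurable[ℱ m] (fun ω => Real.exp (t * f ω)) :=
      (Real.continuous_exp.comp (continuous_const.mul continuous_id)).comp_stronglyMeasurable hf
    have hGm : StronglyMeasurable[ℱ m] G := by
      have h1 := hexp (hM.stronglyAdapted m)
      have h2 := hexp (hA.add (stronglyMeasurable_const (b := K)))
      have h3 := hexp hA
      have h4 := h1.mul ((h2.sub h3).mul (stronglyMeasurable_const (b := K⁻¹)))
      exact h4
    have iX : Integrable (M (m + 1) - M m) μ := (hM.integrable _).sub (hM.integrable _)
    have iGX : Integrable (G * (M (m + 1) - M m)) μ := by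
      refine iX.bdd_mul (c := Real.exp (|t| * (m * K)) *
        ((Real.exp (|t| * K) + Real.exp (|t| * K)) / K))
        (hGm.mono (ℱ.le m)).aestronglyMeasurable ?_
      filter_upwards [aux_bdd hM hM0 hdiff m, hA0] with ω h1 h2
      have b1 : ∀ x y : ℝ, |x| ≤ y → Real.exp (t * x) ≤ Real.exp (|t| * y) := fun x y hxy => by
        apply Real.exp_le_exp.2
        calc t * x ≤ |t * x| := le_abs_self _
          _ = |t| * |x| := abs_mul _ _
          _ ≤ _ := by gcongr
      simp only [hG, norm_mul, norm_div, Real.norm_eq_abs, abs_of_pos hK, Real.abs_exp]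
      refine mul_le_mul (b1 _ _ h1) ?_ (by positivity) (by positivity)
      refine div_le_div_of_nonneg_right ?_ hK.le
      have c1 := b1 (A ω + K) K (abs_le.2 ⟨by linarith, by linarith⟩)
      have c2 := b1 (A ω) K (abs_le.2 ⟨by linarith, by linarith⟩)
      have c3 := Real.exp_pos (t * (A ω + K))
      have c4 := Real.exp_pos (t * A ω)
      exact abs_le.2 ⟨by linarith, by linarith⟩
    have hz : ∫ ω, (G * (M (m + 1) - M m)) ω ∂μ = 0 := by
      rw [← integral_condExp (ℱ.le m)]
      rw [integral_congr_ae (g := 0)]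
      · simp
      · filter_upwards [condExp_mul_of_stronglyMeasurable_left hGm iGX iX, hX0] with ω h1 h2
        rw [h1, Pi.mul_apply, h2]; simp
    have ig := aux_int hM hM0 hdiff m t
    calc ∫ ω, Real.exp (t * M (m + 1) ω) ∂μ
        ≤ ∫ ω, (Real.exp (t * M m ω) * E + (G * (M (m + 1) - M m)) ω) ∂μ := by
          refine integral_mono_ae (aux_int hM hM0 hdiff (m + 1) t)
            ((ig.mul_const E).add iGX) ?_
          filter_upwards [h, hA0] with ω h1 h2
          have := aux_pointwise (A ω) K t (M (m + 1) ω - M m ω) hK h2.1 h2.2 h1.1 h1.2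
          have e : Real.exp (t * M (m + 1) ω)
              = Real.exp (t * M m ω) * Real.exp (t * (M (m + 1) ω - M m ω)) := by
            rw [← Real.exp_add]; ring_nf
          simp only [Pi.mul_apply, Pi.sub_apply, hG]
          rw [e, mul_assoc, ← mul_add]
          exact mul_le_mul_of_nonneg_left this (Real.exp_pos _).le
      _ = (∫ ω, Real.exp (t * M m ω) ∂μ) * E := by
          rw [integral_add (ig.mul_const E) iGX, hz, integral_mul_const, add_zero]
      _ ≤ Real.exp (m * (K ^ 2 / 4) * t ^ 2 / 2) * E := by gcongr
      _ = _ := by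
          rw [hE, ← Real.exp_add]; push_cast; ring_nf

lemma aux_tail (hK : 0 < K) (hM : Martingale M ℱ μ) (hM0 : M 0 = 0)
    (hdiff : ∀ m : ℕ, ∃ A : Ω → ℝ, StronglyMeasurable[ℱ m] A ∧
      ∀ᵐ ω ∂μ, A ω ≤ M (m + 1) ω - M m ω ∧ M (m + 1) ω - M m ω ≤ A ω + K) (m : ℕ)
    (hm : 1 ≤ m) (L : ℝ) (hL : 0 ≤ L) :
    μ {ω | K * Real.sqrt (m * L / 2) ≤ |M m ω|} ≤ ENNReal.ofReal (2 * Real.exp (-L)) := by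
  have hm' : (0 : ℝ) < m := by exact_mod_cast hm
  have hc : 0 ≤ m * (K ^ 2 / 4) := by positivity
  have hs : ProbabilityTheory.HasSubgaussianMGF (M m) ⟨m * (K ^ 2 / 4), hc⟩ μ :=
    ⟨aux_int hM hM0 hdiff m, fun t => aux_mgf hK hM hM0 hdiff m t⟩
  have h0 : 0 ≤ K * Real.sqrt (m * L / 2) := by positivity
  have e : -(K * Real.sqrt (m * L / 2)) ^ 2 / (2 * (m * (K ^ 2 / 4))) = -L := by
    rw [mul_pow, Real.sq_sqrt (by positivity)]
    field_simp
    try ring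
  have h1 : μ.real {ω | K * Real.sqrt (m * L / 2) ≤ M m ω} ≤
    Real.exp (-(K * Real.sqrt (m * L / 2)) ^ 2 / (2 * (m * (K ^ 2 / 4)))) := hs.measure_ge_le h0
  have h2 : μ.real {ω | K * Real.sqrt (m * L / 2) ≤ (-M m) ω} ≤
    Real.exp (-(K * Real.sqrt (m * L / 2)) ^ 2 / (2 * (m * (K ^ 2 / 4)))) :=
    hs.neg.measure_ge_le h0
  rw [e] at h1 h2
  have hsub : {ω | K * Real.sqrt (m * L / 2) ≤ |M m ω|} ⊆
      {ω | K * Real.sqrt (m * L / 2) ≤ M m ω} ∪ {ω | K * Real.sqrt (m * L / 2) ≤ (-M m) ω} := by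
    intro ω hω
    have hω2 : K * Real.sqrt (m * L / 2) ≤ |M m ω| := hω
    exact le_abs.1 hω2
  have h3 := (measureReal_mono hsub (μ := μ)).trans (measureReal_union_le _ _)
  rw [← ofReal_measureReal]
  apply ENNReal.ofReal_le_ofReal
  linarith

end

/-- Uniform-in-`ℓ` McDiarmid-type concentration at a random index (Lemma 4.4): if
`M^1,…,M^α` are martingales with `M^ℓ_0 = 0` whose increments satisfy
`A^ℓ_m ≤ M^ℓ_m − M^ℓ_{m−1} ≤ A^ℓ_m + K` for some `F_{m−1}`-measurable `A^ℓ_m`, then for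
any `ℕ`-valued random variable `R` and `z > 0`,
`P(R ≥ 1 and max_{1≤ℓ≤α} |M^ℓ_R| ≥ K √(R(z + log α + 2 log R)/2)) ≤ (π²/3) e^{−z}`. -/
theorem martingale_family_random_index_concentration {Ω : Type*} [m0 : MeasurableSpace Ω]
    (μ : Measure Ω) [IsProbabilityMeasure μ]
    (α : ℕ) (hα : 1 ≤ α)
    (ℱ : Filtration ℕ m0) (M : ℕ → ℕ → Ω → ℝ)
    (hM : ∀ ℓ : ℕ, 1 ≤ ℓ → ℓ ≤ α → Martingale (M ℓ) ℱ μ)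
    (hM0 : ∀ ℓ : ℕ, 1 ≤ ℓ → ℓ ≤ α → M ℓ 0 = 0)
    (K : ℝ) (hK : 0 < K)
    (hdiff : ∀ ℓ : ℕ, 1 ≤ ℓ → ℓ ≤ α → ∀ m : ℕ, ∃ A : Ω → ℝ,
      StronglyMeasurable[ℱ m] A ∧
      ∀ᵐ ω ∂μ, A ω ≤ M ℓ (m + 1) ω - M ℓ m ω ∧ M ℓ (m + 1) ω - M ℓ m ω ≤ A ω + K)
    (R : Ω → ℕ) (z : ℝ) (hz : 0 < z) :
    (μ {ω | 1 ≤ R ω ∧ ∃ ℓ : ℕ, 1 ≤ ℓ ∧ ℓ ≤ α ∧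
        K * Real.sqrt ((R ω : ℝ) * (z + Real.log α + 2 * Real.log (R ω)) / 2) ≤
          |M ℓ (R ω) ω|}).toReal ≤
      Real.pi ^ 2 / 3 * Real.exp (-z) := by
  set c : ℕ → ℝ := fun m => 2 * Real.exp (-z) * (1 / (m : ℝ) ^ 2) with hcdef
  have hα' : (0 : ℝ) < α := by exact_mod_cast hα
  have hlα : 0 ≤ Real.log α := Real.log_natCast_nonneg α
  have hc0 : ∀ m, 0 ≤ c m := fun m => by positivity
  have hcs : HasSum c (Real.pi ^ 2 / 3 * Real.exp (-z)) := by
    have := hasSum_zeta_two.mul_left (2 * Real.exp (-z))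
    have e : Real.pi ^ 2 / 3 * Real.exp (-z) = 2 * Real.exp (-z) * (Real.pi ^ 2 / 6) := by ring
    rw [e]
    exact this
  set S : ℕ → Set Ω := fun m => {ω | 1 ≤ m ∧ ∃ ℓ : ℕ, 1 ≤ ℓ ∧ ℓ ≤ α ∧
        K * Real.sqrt ((m : ℝ) * (z + Real.log α + 2 * Real.log m) / 2) ≤ |M ℓ m ω|} with hS
  have hSm : ∀ m, μ (S m) ≤ ENNReal.ofReal (c m) := by
    intro m
    by_cases hm : 1 ≤ m
    swap
    · have : S m = ∅ := by ext ω; simp [hS, hm]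
      simp [this]
    have hm' : (0 : ℝ) < m := by exact_mod_cast hm
    have hlm : 0 ≤ Real.log m := Real.log_natCast_nonneg m
    have hsub : S m ⊆ ⋃ ℓ ∈ Finset.Icc 1 α,
        {ω | K * Real.sqrt ((m : ℝ) * (z + Real.log α + 2 * Real.log m) / 2) ≤ |M ℓ m ω|} := by
      rintro ω ⟨-, ℓ, h1, h2, h3⟩
      exact Set.mem_biUnion (Finset.mem_coe.2 (Finset.mem_Icc.2 ⟨h1, h2⟩)) h3
    refine (measure_mono hsub).trans ((measure_biUnion_finset_le _ _).trans ?_)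
    have hle : ∀ ℓ ∈ Finset.Icc 1 α,
        μ {ω | K * Real.sqrt ((m : ℝ) * (z + Real.log α + 2 * Real.log m) / 2) ≤ |M ℓ m ω|}
          ≤ ENNReal.ofReal (2 * Real.exp (-(z + Real.log α + 2 * Real.log m))) := by
      intro ℓ hℓ
      obtain ⟨h1, h2⟩ := Finset.mem_Icc.1 hℓ
      exact aux_tail hK (hM ℓ h1 h2) (hM0 ℓ h1 h2) (hdiff ℓ h1 h2) m hm _ (by positivity)
    refine (Finset.sum_le_sum hle).trans (le_of_eq ?_)
    rw [Finset.sum_const, Nat.card_Icc, Nat.add_sub_cancel, nsmul_eq_mul,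
      ← ENNReal.ofReal_natCast, ← ENNReal.ofReal_mul hα'.le]
    congr 1
    have e : Real.exp (-(z + Real.log α + 2 * Real.log m))
        = Real.exp (-z) * (α : ℝ)⁻¹ * ((m : ℝ) ^ 2)⁻¹ := by
      rw [neg_add, neg_add, Real.exp_add, Real.exp_add, Real.exp_neg (Real.log α),
        Real.exp_log hα', Real.exp_neg (2 * Real.log m), two_mul, Real.exp_add,
        Real.exp_log hm', sq]
    rw [e, hcdef]
    field_simp
  apply ENNReal.toReal_le_of_le_ofReal (by positivity)
  have hsub : {ω | 1 ≤ R ω ∧ ∃ ℓ : ℕ, 1 ≤ ℓ ∧ ℓ ≤ α ∧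
        K * Real.sqrt ((R ω : ℝ) * (z + Real.log α + 2 * Real.log (R ω)) / 2) ≤
          |M ℓ (R ω) ω|} ⊆ ⋃ m, S m := by
    intro ω hω
    exact Set.mem_iUnion.2 ⟨R ω, hω⟩
  refine (measure_mono hsub).trans ((measure_iUnion_le _).trans ?_)
  refine (ENNReal.tsum_le_tsum hSm).trans ?_
  rw [← ENNReal.ofReal_tsum_of_nonneg hc0 hcs.summable, hcs.tsum_eq]
end
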